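/- For each integer k with 1 ≤ k < p define d_k = λ_k − λ_{k+1}, ε_k = λ_{k+1} − λ_p, W_1^k = span{ξ_1, ..., ξ_k}, and decompose δ = δ_1^k + δ_2^k with δ_1^k ∈ W_1^k and δ_2^k ∈ span{ξ_{k+1}, ..., ξ_p}; set d̃_k = d_k·ρ||δ_2^k||_2^2/(d_k + ρ||δ||_2^2), and define C_k = √(k+1) + √(p−k−1)·((λ_p + ε_k)/λ_p)·( ε_k/λ_p + √( ε_k/(d̃_k − 2ε_k) ) ) if d̃_k − 2ε_k > 0, and C_k = ∞ otherwise. Suppose δ ≠ 0, let K be the least positive integer with δ ∈ W_1^K, and assume λ_K > λ_{K+1} whenever K < p. Then ||U^T β||_1 / ||U^T β||_2 ≤ min{C, √K}, where C = min_{1 ≤ k < K} C_k (with C = ∞ when K = 1). (Corollary 2) -/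

import Mathlib

open Matrix

lemma scal_ineq (d ρ a b y s r y2 : ℝ) (hd : 0 ≤ d) (hρ : 0 ≤ ρ) (hy : y2 = y ^ 2) (hs : s ^ 2 ≤ a ^ 2 * y2) :
    d * ρ * b ^ 2 * (y2 + r ^ 2) ≤ (d + ρ * (a ^ 2 + b ^ 2)) * (d * y2 + ρ * (s + b * r) ^ 2) := by
  subst hy
  have h1 : |s| ≤ |a * y| := by
    apply sq_le_sq.mp; nlinarith
  set w := s + b * r with hw
  have hbr : b * r = w - s := by rw [hw]; ring
  have h2 : -(s * w) ≤ |a * y| * |w| := by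
    calc -(s * w) ≤ |s * w| := neg_le_abs _
      _ = |s| * |w| := abs_mul _ _
      _ ≤ _ := by gcongr
  have h3 : 2 * (d * ρ) * (|a * y| * |w|) ≤ d ^ 2 * y ^ 2 + ρ ^ 2 * a ^ 2 * w ^ 2 := by
    rw [abs_mul]
    have := sq_nonneg (d * |y| - ρ * |a| * |w|)
    have e1 := sq_abs y
    have e2 := sq_abs a
    have e3 := sq_abs w
    have : (d * |y| - ρ * |a| * |w|) ^ 2 = d ^ 2 * y ^ 2 + ρ ^ 2 * a ^ 2 * w ^ 2 - 2 * (d * ρ) * (|a| * |y| * |w|) := by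
      rw [← e1, ← e2, ← e3]; ring
    linarith
  have hdr : 0 ≤ d * ρ := mul_nonneg hd hρ
  have h4 := mul_le_mul_of_nonneg_left h2 hdr
  have h5 := mul_le_mul_of_nonneg_left hs hdr
  have h6 : 0 ≤ ρ ^ 2 * b ^ 2 * w ^ 2 := by positivity
  have h7 : (d + ρ * (a ^ 2 + b ^ 2)) * (d * y ^ 2 + ρ * w ^ 2) - d * ρ * b ^ 2 * (y ^ 2 + r ^ 2)
      = d ^ 2 * y ^ 2 + d * ρ * (a ^ 2 * y ^ 2) + d * ρ * w ^ 2 + ρ ^ 2 * a ^ 2 * w ^ 2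
        + ρ ^ 2 * b ^ 2 * w ^ 2 - d * ρ * (b * r) ^ 2 := by ring
  rw [hbr] at h7
  nlinarith

lemma key_coord {ι : Type*} [Fintype ι] (P : ι → Prop) [DecidablePred P]
    (lam D X : ι → ℝ) (lp d ε ρ b2 a2 dt : ℝ)
    (hlp : 0 < lp) (hd : 0 ≤ d) (hρ : 0 < ρ) (hε : 0 ≤ ε)
    (h1 : ∀ j, P j → lp + d ≤ lam j) (h2 : ∀ j, ¬ P j → lp ≤ lam j ∧ lam j ≤ lp + ε)
    (ha2 : a2 = ∑ j, if P j then D j ^ 2 else 0)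
    (hb2 : b2 = ∑ j, if P j then 0 else D j ^ 2)
    (hdt : dt = d * ρ * b2 / (d + ρ * (a2 + b2))) (hdtpos : 0 < dt)
    (hX : ∑ j, lam j * X j ^ 2 + ρ * (∑ j, D j * X j) ^ 2 ≤ (lp + ε) * ∑ j, X j ^ 2) :
    ∑ j, X j * (D j / lam j) ≤
      Real.sqrt (∑ j, X j ^ 2) * Real.sqrt (∑ j, (D j / lam j) ^ 2) *
        (ε / lp + Real.sqrt (ε / dt)) := by
  have hlam : ∀ j, 0 < lam j := fun j => by
    by_cases h : P j
    · linarith [h1 j h]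
    · linarith [(h2 j h).1]
  have ha0 : 0 ≤ a2 := by
    rw [ha2]; apply Finset.sum_nonneg; intro j _; split_ifs <;> positivity
  have hb0 : 0 ≤ b2 := by
    rw [hb2]; apply Finset.sum_nonneg; intro j _; split_ifs <;> positivity
  have hb : 0 < b2 := by
    rcases hb0.lt_or_eq with h | h
    · exact h
    · rw [← h] at hdt; simp at hdt; linarith
  have hden : 0 < d + ρ * (a2 + b2) := by positivity
  set m := ∑ j, (if P j then 0 else D j * X j) with hm
  set r := m / b2 with hr
  set s := ∑ j, (if P j then D j * X j else 0) with hs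
  set y2 := ∑ j, (if P j then X j ^ 2 else 0) with hy2
  have hy0 : 0 ≤ y2 := by
    rw [hy2]; apply Finset.sum_nonneg; intro j _; split_ifs <;> positivity
  have hrm : r * b2 = m := by rw [hr]; field_simp
  let v : ι → ℝ := fun j => if P j then X j else r * D j
  let q : ι → ℝ := fun j => if P j then 0 else X j - r * D j
  have hvv : ∑ j, v j ^ 2 = y2 + r ^ 2 * b2 := by
    rw [hy2, hb2, Finset.mul_sum, ← Finset.sum_add_distrib]
    apply Finset.sum_congr rfl; intro j _
    simp only [v]; split_ifs <;> ring
  have hqD : ∑ j, q j * D j = 0 := by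
    have : ∑ j, q j * D j = m - r * b2 := by
      rw [hm, hb2, Finset.mul_sum, ← Finset.sum_sub_distrib]
      apply Finset.sum_congr rfl; intro j _
      simp only [q]; split_ifs <;> ring
    rw [this, hrm]; ring
  have hvq : ∑ j, X j ^ 2 = ∑ j, v j ^ 2 + ∑ j, q j ^ 2 := by
    have : ∑ j, X j ^ 2 = ∑ j, v j ^ 2 + ∑ j, q j ^ 2 + 2 * r * ∑ j, q j * D j := by
      rw [Finset.mul_sum, ← Finset.sum_add_distrib, ← Finset.sum_add_distrib]
      apply Finset.sum_congr rfl; intro j _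
      simp only [q, v]; split_ifs <;> ring
    rw [this, hqD]; ring
  have hss : s ^ 2 ≤ a2 * y2 := by
    have := Finset.sum_mul_sq_le_sq_mul_sq Finset.univ (fun j => if P j then D j else 0)
      (fun j => if P j then X j else 0)
    simpa [hs, ha2, hy2, ite_pow, ← ite_and] using this
  have hsm : ∑ j, D j * X j = s + r * b2 := by
    rw [hrm, hs, hm, ← Finset.sum_add_distrib]
    apply Finset.sum_congr rfl; intro j _
    split_ifs <;> ring
  have hlow : lp * ∑ j, X j ^ 2 + d * y2 ≤ ∑ j, lam j * X j ^ 2 := by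
    rw [hy2, Finset.mul_sum, Finset.mul_sum, ← Finset.sum_add_distrib]
    apply Finset.sum_le_sum; intro j _
    have := sq_nonneg (X j)
    split_ifs with h
    · nlinarith [h1 j h]
    · nlinarith [(h2 j h).1]
  have hV : dt * ∑ j, v j ^ 2 ≤ ε * ∑ j, X j ^ 2 := by
    have sc := scal_ineq d ρ (√a2) (√b2) (√y2) s (r * √b2) y2 hd hρ.le
      (Real.sq_sqrt hy0).symm (by rw [Real.sq_sqrt ha0]; exact hss)
    have e : √b2 * (r * √b2) = r * b2 := by
      have := Real.mul_self_sqrt hb0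
      linear_combination r * this
    rw [mul_pow, Real.sq_sqrt ha0, Real.sq_sqrt hb0, e] at sc
    have : dt * ∑ j, v j ^ 2 ≤ d * y2 + ρ * (s + r * b2) ^ 2 := by
      rw [hvv, hdt, div_mul_eq_mul_div, div_le_iff₀ hden]
      linarith
    rw [hsm] at hX
    linarith
  have hXn : 0 ≤ ∑ j, X j ^ 2 := Finset.sum_nonneg fun j _ => sq_nonneg _
  have hvs : √(∑ j, v j ^ 2) ≤ √(ε / dt) * √(∑ j, X j ^ 2) := by
    rw [← Real.sqrt_mul (by positivity)]
    apply Real.sqrt_le_sqrt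
    rw [div_mul_eq_mul_div, le_div_iff₀ hdtpos]
    linarith
  have hqs : √(∑ j, q j ^ 2) ≤ √(∑ j, X j ^ 2) := by
    apply Real.sqrt_le_sqrt
    rw [hvq]
    have : 0 ≤ ∑ j, v j ^ 2 := Finset.sum_nonneg fun j _ => sq_nonneg _
    linarith
  have hvB : ∑ j, v j * (D j / lam j) ≤ √(∑ j, v j ^ 2) * √(∑ j, (D j / lam j) ^ 2) :=
    Real.sum_mul_le_sqrt_mul_sqrt _ _ _
  have hqB : ∑ j, q j * (D j / lam j) ≤ √(∑ j, q j ^ 2) * (ε / lp * √(∑ j, (D j / lam j) ^ 2)) := by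
    have e1 : ∑ j, q j * (D j / lam j) =
        ∑ j, q j * (if P j then 0 else (lp - lam j) / lp * (D j / lam j)) := by
      have : ∑ j, q j * (D j / lam j) = ∑ j, q j * (D j / lam j) - (∑ j, q j * D j) / lp := by
        rw [hqD]; simp
      rw [this, Finset.sum_div, ← Finset.sum_sub_distrib]
      apply Finset.sum_congr rfl; intro j _
      have := (hlam j).ne'
      by_cases h : P j
      · simp [q, h]
      · simp only [h, if_false]; field_simp
    rw [e1]
    refine (Real.sum_mul_le_sqrt_mul_sqrt _ _ _).trans ?_
    gcongr
    have e2 : ε / lp = √((ε / lp) ^ 2) := (Real.sqrt_sq (by positivity)).symm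
    rw [e2, ← Real.sqrt_mul (by positivity)]
    apply Real.sqrt_le_sqrt
    rw [Finset.mul_sum]
    apply Finset.sum_le_sum; intro j _
    split_ifs with h
    · rw [zero_pow two_ne_zero]; positivity
    · rw [mul_pow]
      gcongr ?_ * _
      rw [div_pow, div_pow]
      gcongr ?_ / _
      nlinarith [(h2 j h).1, (h2 j h).2]
  have hsplit : ∑ j, X j * (D j / lam j) = ∑ j, v j * (D j / lam j) + ∑ j, q j * (D j / lam j) := by
    rw [← Finset.sum_add_distrib]
    apply Finset.sum_congr rfl; intro j _
    simp only [q, v]; split_ifs <;> ring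
  rw [hsplit]
  have hB := Real.sqrt_nonneg (∑ j, (D j / lam j) ^ 2)
  have f1 := mul_le_mul_of_nonneg_right hvs hB
  have f2 := mul_le_mul_of_nonneg_right hqs
    (show 0 ≤ ε / lp * √(∑ j, (D j / lam j) ^ 2) by positivity)
  have e := add_le_add (hvB.trans f1) (hqB.trans f2)
  refine e.trans (le_of_eq ?_)
  ring

/-- dimension count -/
lemma exists_low {p m : ℕ} (i : Fin p) (hmi : m ≤ i) (w : Fin m → Fin p → ℝ) :
    ∃ c : Fin p → ℝ, c ≠ 0 ∧ (∀ l, w l ⬝ᵥ c = 0) ∧ ∀ j, i < j → c j = 0 := by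
  let L1 : (Fin p → ℝ) →ₗ[ℝ] (Fin m → ℝ) := Matrix.mulVecLin (Matrix.of w)
  let L2 : (Fin p → ℝ) →ₗ[ℝ] (Fin (p - 1 - i) → ℝ) :=
    LinearMap.funLeft ℝ ℝ (fun t : Fin (p - 1 - i) => (⟨i + 1 + t, by omega⟩ : Fin p))
  have hk : LinearMap.ker (L1.prod L2) ≠ ⊥ := by
    apply LinearMap.ker_ne_bot_of_finrank_lt
    simp
    omega
  obtain ⟨c, hc, hc0⟩ := Submodule.exists_mem_ne_zero_of_ne_bot hk
  refine ⟨c, hc0, ?_, ?_⟩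
  all_goals
    rw [LinearMap.mem_ker, LinearMap.prod_apply] at hc
    have hc := Prod.mk_eq_zero.mp hc
  · intro l
    exact congrFun hc.1 l
  · intro j hj
    have hj' : (i : ℕ) < j := hj
    have := congrFun hc.2 ⟨j - (i + 1), by omega⟩
    simp only [L2, LinearMap.funLeft_apply, Pi.zero_apply] at this
    convert this using 2
    ext; simp; omega

lemma parseval {p : ℕ} (Q : Matrix (Fin p) (Fin p) ℝ) (hQ : Qᵀ * Q = 1) (v w : Fin p → ℝ) :
    (Q *ᵥ v) ⬝ᵥ (Q *ᵥ w) = v ⬝ᵥ w := by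
  rw [Matrix.dotProduct_mulVec, ← Matrix.mulVec_transpose, Matrix.mulVec_mulVec, hQ,
    Matrix.one_mulVec]

lemma self_dot {p : ℕ} (v : Fin p → ℝ) : v ⬝ᵥ v = ∑ i, v i ^ 2 := by
  simp [dotProduct, sq]

lemma l1_part {ι : Type*} (s : Finset ι) (t : ι → ℝ) :
    ∑ i ∈ s, |t i| ≤ √(s.card) * √(∑ i ∈ s, t i ^ 2) := by
  have := Real.sum_mul_le_sqrt_mul_sqrt s (fun _ => 1) (fun i => |t i|)
  simpa using this

lemma card_lt {p m : ℕ} (h : m ≤ p) : (Finset.univ.filter fun i : Fin p => (i : ℕ) < m).card = m := by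
  rw [Fin.card_filter_val_lt, min_eq_right h]

/-- Corollary 2: if `K` is the least positive integer with `δ ∈ W₁^K`, then
`‖Uᵀβ‖₁/‖Uᵀβ‖₂ ≤ min{C, √K}` where `C = min_{1 ≤ k < K} C_k` and `C_k = ∞`
unless `d̃_k − 2ε_k > 0`.  This is expressed as: the ratio is at most `√K`, and
for every `1 ≤ k < K` with `d̃_k − 2ε_k > 0` the ratio is at most `C_k`. -/
theorem rotation_l1_l2_ratio_corollary
    {p : ℕ} (hp : 2 ≤ p)
    (S : Matrix (Fin p) (Fin p) ℝ) (hS : S.IsSymm)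
    (lam : Fin p → ℝ) (xi : Fin p → (Fin p → ℝ))
    (hpos : ∀ j, 0 < lam j)
    (hdesc : ∀ i j : Fin p, i ≤ j → lam j ≤ lam i)
    (horth : ∀ i j : Fin p, xi i ⬝ᵥ xi j = if i = j then (1 : ℝ) else 0)
    (heig : ∀ j, S.mulVec (xi j) = lam j • xi j)
    (δ : Fin p → ℝ) (hδ : δ ≠ 0) (ρ : ℝ) (hρ : 0 < ρ)
    (U : Matrix (Fin p) (Fin p) ℝ) (hU : Uᵀ * U = 1)
    (η : Fin p → ℝ) (hηdesc : ∀ i j : Fin p, i ≤ j → η j ≤ η i)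
    (hdiag : Uᵀ * (S + ρ • vecMulVec δ δ) * U = Matrix.diagonal η)
    -- K is the least positive integer with δ ∈ W₁^K
    (K : ℕ) (hK1 : 1 ≤ K) (hKp : K ≤ p)
    (hmemK : δ ∈ Submodule.span ℝ
      (Set.range fun i : Fin K => xi ⟨i.1, lt_of_lt_of_le i.isLt hKp⟩))
    (hleast : ∀ m : ℕ, 1 ≤ m → (hm : m < K) →
      δ ∉ Submodule.span ℝ (Set.range fun i : Fin m => xi ⟨i.1, by omega⟩))
    -- λ_K > λ_{K+1} whenever K < p
    (hgapK : ∀ h : K < p, lam ⟨K, h⟩ < lam ⟨K - 1, by omega⟩) :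
    (∑ i, |(Uᵀ).mulVec (S⁻¹.mulVec δ) i|) /
        Real.sqrt (∑ i, ((Uᵀ).mulVec (S⁻¹.mulVec δ) i) ^ 2) ≤
      Real.sqrt K ∧
    ∀ k : ℕ, 1 ≤ k → (hkK : k < K) →
      ∀ δ2k : Fin p → ℝ,
        δ2k = (∑ i ∈ Finset.univ.filter fun i : Fin p => k ≤ (i : ℕ),
          (xi i ⬝ᵥ δ) • xi i) →
      ∀ dk εk dtk : ℝ,
        dk = lam ⟨k - 1, by omega⟩ - lam ⟨k, by omega⟩ →
        εk = lam ⟨k, by omega⟩ - lam ⟨p - 1, by omega⟩ →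
        dtk = dk * ρ * (∑ i, δ2k i ^ 2) / (dk + ρ * ∑ i, δ i ^ 2) →
        0 < dtk - 2 * εk →
        (∑ i, |(Uᵀ).mulVec (S⁻¹.mulVec δ) i|) /
            Real.sqrt (∑ i, ((Uᵀ).mulVec (S⁻¹.mulVec δ) i) ^ 2) ≤
          Real.sqrt (k + 1) +
            Real.sqrt ((p - k - 1 : ℕ)) *
              ((lam ⟨p - 1, by omega⟩ + εk) / lam ⟨p - 1, by omega⟩) *
              (εk / lam ⟨p - 1, by omega⟩ + Real.sqrt (εk / (dtk - 2 * εk))) := by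
  set M : Matrix (Fin p) (Fin p) ℝ := Matrix.of xi with hM
  have hMr : M * Mᵀ = 1 := by
    ext i j
    rw [Matrix.mul_apply, Matrix.one_apply, ← horth i j]
    rfl
  have hMl : Mᵀ * M = 1 := mul_eq_one_comm.mp hMr
  have hUr : U * Uᵀ = 1 := mul_eq_one_comm.mp hU
  have hUr' : (Uᵀ)ᵀ * Uᵀ = 1 := by rw [transpose_transpose]; exact hUr
  have hMS : ∀ w j, (M *ᵥ (S *ᵥ w)) j = lam j * (M *ᵥ w) j := by
    intro w j
    change xi j ⬝ᵥ (S *ᵥ w) = lam j * (xi j ⬝ᵥ w)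
    rw [Matrix.dotProduct_mulVec, ← Matrix.mulVec_transpose, hS.eq, heig, smul_dotProduct,
      smul_eq_mul]
  have hMinj : ∀ w, M *ᵥ w = 0 → w = 0 := by
    intro w hw
    rw [← Matrix.one_mulVec w, ← hMl, ← Matrix.mulVec_mulVec, hw, Matrix.mulVec_zero]
  have hSu : IsUnit S.det := by
    rw [isUnit_iff_ne_zero]
    intro h0
    obtain ⟨v, hv, hv0⟩ := Matrix.exists_mulVec_eq_zero_iff.mpr h0
    apply hv
    apply hMinj
    ext j
    have := hMS v j
    rw [hv0, Matrix.mulVec_zero] at this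
    have h3 := (hpos j).ne'
    simp only [Pi.zero_apply, zero_eq_mul] at this
    exact this.resolve_left h3
  set β := S⁻¹ *ᵥ δ with hβ
  have hSβ : S *ᵥ β = δ := by
    rw [hβ, Matrix.mulVec_mulVec, Matrix.mul_nonsing_inv _ hSu, Matrix.one_mulVec]
  set D := M *ᵥ δ with hD
  have hB : ∀ j, (M *ᵥ β) j = D j / lam j := by
    intro j
    rw [eq_div_iff (hpos j).ne', mul_comm, ← hMS, hSβ]
  set A := S + ρ • vecMulVec δ δ with hA
  have hAw : ∀ w, A *ᵥ w = S *ᵥ w + (ρ * (δ ⬝ᵥ w)) • δ := by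
    intro w
    rw [hA, Matrix.add_mulVec, Matrix.smul_mulVec, Matrix.vecMulVec_mulVec]
    ext i
    simp
    ring
  have hDX : ∀ w, δ ⬝ᵥ w = ∑ j, D j * (M *ᵥ w) j := by
    intro w
    rw [← parseval M hMl]; rfl
  have hMA : ∀ w j, (M *ᵥ (A *ᵥ w)) j = lam j * (M *ᵥ w) j + ρ * (δ ⬝ᵥ w) * D j := by
    intro w j
    rw [hAw, Matrix.mulVec_add, Matrix.mulVec_smul, Pi.add_apply, hMS]
    rfl
  have hquad : ∀ w, w ⬝ᵥ (A *ᵥ w) =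
      ∑ j, lam j * (M *ᵥ w) j ^ 2 + ρ * (∑ j, D j * (M *ᵥ w) j) ^ 2 := by
    intro w
    rw [← parseval M hMl w]
    have : (M *ᵥ w) ⬝ᵥ (M *ᵥ (A *ᵥ w)) =
        ∑ j, (lam j * (M *ᵥ w) j ^ 2 + ρ * (δ ⬝ᵥ w) * (D j * (M *ᵥ w) j)) := by
      apply Finset.sum_congr rfl
      intro j _
      rw [hMA]; ring
    rw [this, Finset.sum_add_distrib, ← Finset.mul_sum, hDX w]
    ring
  have hnorm : ∀ w, w ⬝ᵥ w = ∑ j, (M *ᵥ w) j ^ 2 := by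
    intro w
    rw [← parseval M hMl w, self_dot]
  have hUA : ∀ c, Uᵀ *ᵥ (A *ᵥ (U *ᵥ c)) = fun j => η j * c j := by
    intro c
    rw [Matrix.mulVec_mulVec, Matrix.mulVec_mulVec, hdiag]
    ext j
    rw [Matrix.mulVec_diagonal]
  have hUU : ∀ c, Uᵀ *ᵥ (U *ᵥ c) = c := by
    intro c
    rw [Matrix.mulVec_mulVec, hU, Matrix.one_mulVec]
  have hUU' : ∀ c, U *ᵥ (Uᵀ *ᵥ c) = c := by
    intro c
    rw [Matrix.mulVec_mulVec, hUr, Matrix.one_mulVec]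
  have hquadU : ∀ c, (U *ᵥ c) ⬝ᵥ (A *ᵥ (U *ᵥ c)) = ∑ j, η j * c j ^ 2 := by
    intro c
    rw [← parseval Uᵀ hUr', hUA, hUU]
    apply Finset.sum_congr rfl
    intro j _
    ring
  -- eigenvalue upper bound
  have heta : ∀ (m : ℕ) (i : Fin p), m ≤ i → ∀ w : Fin m → Fin p → ℝ, ∀ L : ℝ,
      (∀ x : Fin p → ℝ, (∀ l, w l ⬝ᵥ x = 0) → x ⬝ᵥ (A *ᵥ x) ≤ L * (x ⬝ᵥ x)) → η i ≤ L := by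
    intro m i hmi w L hx
    obtain ⟨c, hc0, hcw, hcj⟩ := exists_low i hmi (fun l => Uᵀ *ᵥ w l)
    have h1 := hx (U *ᵥ c) (fun l => by
      rw [← hcw l, Matrix.dotProduct_mulVec, ← Matrix.mulVec_transpose])
    rw [hquadU, parseval U hU, self_dot] at h1
    have h2 : η i * ∑ j, c j ^ 2 ≤ ∑ j, η j * c j ^ 2 := by
      rw [Finset.mul_sum]
      apply Finset.sum_le_sum
      intro j _
      rcases le_or_gt j i with h | h
      · exact mul_le_mul_of_nonneg_right (hηdesc j i h) (sq_nonneg _)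
      · simp [hcj j h]
    have h3 : 0 < ∑ j, c j ^ 2 := by
      obtain ⟨j, hj⟩ := Function.ne_iff.mp hc0
      exact Finset.sum_pos' (fun _ _ => sq_nonneg _) ⟨j, Finset.mem_univ _, by
        have : c j ≠ 0 := hj
        positivity⟩
    exact le_of_mul_le_mul_right (h2.trans h1) h3
  set t := Uᵀ *ᵥ β with ht
  have hDK : ∀ j : Fin p, K ≤ j → D j = 0 := by
    intro j hj
    change xi j ⬝ᵥ δ = 0
    refine Submodule.span_induction (p := fun x _ => xi j ⬝ᵥ x = 0) ?_ ?_ ?_ ?_ hmemK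
    · rintro _ ⟨i, rfl⟩
      rw [horth, if_neg]
      intro h
      rw [h] at hj
      have := i.isLt
      simp at hj
      omega
    · simp
    · intro x y _ _ hx hy
      rw [dotProduct_add, hx, hy, add_zero]
    · intro a x _ hx
      rw [dotProduct_smul, hx, smul_zero]
  have htn : 0 ≤ ∑ i, t i ^ 2 := Finset.sum_nonneg fun _ _ => sq_nonneg _
  constructor
  · have ht0 : ∀ i : Fin p, K ≤ i → t i = 0 := by
      intro i hi
      have hKlt : K < p := by omega
      have hηi : η i ≤ lam ⟨K, hKlt⟩ := by
        apply heta K i hi (fun l => xi ⟨l, by omega⟩)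
        intro x hx
        rw [hquad, hnorm]
        have hx' : ∀ j : Fin p, (j : ℕ) < K → (M *ᵥ x) j = 0 := fun j hj => hx ⟨j, hj⟩
        have h0 : ∑ j, D j * (M *ᵥ x) j = 0 := by
          apply Finset.sum_eq_zero
          intro j _
          rcases lt_or_ge (j : ℕ) K with h | h
          · rw [hx' j h, mul_zero]
          · rw [hDK j h, zero_mul]
        rw [h0, Finset.mul_sum]
        simp only [ne_eq, OfNat.ofNat_ne_zero, not_false_eq_true, zero_pow, mul_zero, add_zero]
        apply Finset.sum_le_sum
        intro j _
        rcases lt_or_ge (j : ℕ) K with h | h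
        · simp [hx' j h]
        · exact mul_le_mul_of_nonneg_right (hdesc _ _ h) (sq_nonneg _)
      set u := U *ᵥ (Pi.single i 1) with hu
      have hAu : A *ᵥ u = η i • u := by
        rw [← hUU' (A *ᵥ u), hu, hUA, ← Matrix.mulVec_smul]
        congr 1
        ext j
        by_cases h : j = i
        · subst h; simp
        · simp [h]
      have hti : t i = u ⬝ᵥ β := by
        rw [← parseval Uᵀ hUr', hu, hUU]
        simp [ht]
      have hXj : ∀ j, lam j * (M *ᵥ u) j + ρ * (δ ⬝ᵥ u) * D j = η i * (M *ᵥ u) j := by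
        intro j
        rw [← hMA, hAu, Matrix.mulVec_smul]; rfl
      set X := M *ᵥ u with hX
      have hsum : ∑ j : Fin p, (if (j : ℕ) < K then (lam j - η i) * X j ^ 2 else 0) + ρ * (δ ⬝ᵥ u) ^ 2 = 0 := by
        have e : ρ * (δ ⬝ᵥ u) ^ 2 = ∑ j, ρ * (δ ⬝ᵥ u) * (D j * X j) := by
          rw [← Finset.mul_sum, ← hDX]; ring
        rw [e, ← Finset.sum_add_distrib]
        apply Finset.sum_eq_zero
        intro j _
        split_ifs with h
        · linear_combination X j * hXj j
        · rw [hDK j (by omega)]; ring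
      have hgap : ∀ j : Fin p, (j : ℕ) < K → 0 < lam j - η i := by
        intro j hj
        have g1 := hgapK hKlt
        have g2 := hdesc j ⟨K - 1, by omega⟩ (by rw [Fin.le_def]; simp; omega)
        linarith
      have hnn : ∀ j ∈ Finset.univ, 0 ≤ (if ((j : Fin p) : ℕ) < K then (lam j - η i) * X j ^ 2 else 0) := by
        intro j _
        split_ifs with h
        · exact mul_nonneg (hgap j h).le (sq_nonneg _)
        · exact le_rfl
      have hz : ∑ j, (if ((j : Fin p) : ℕ) < K then (lam j - η i) * X j ^ 2 else 0) = 0 := by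
        have := Finset.sum_nonneg hnn
        have h2 : 0 ≤ ρ * (δ ⬝ᵥ u) ^ 2 := by positivity
        linarith
      rw [Finset.sum_eq_zero_iff_of_nonneg hnn] at hz
      rw [hti, ← parseval M hMl]
      apply Finset.sum_eq_zero
      intro j _
      rcases lt_or_ge (j : ℕ) K with h | h
      · have := hz j (Finset.mem_univ _)
        rw [if_pos h, mul_eq_zero] at this
        have := pow_eq_zero_iff two_ne_zero |>.mp (this.resolve_left (hgap j h).ne')
        rw [← hX, this, zero_mul]
      · rw [hB, hDK j h, zero_div, mul_zero]
    apply div_le_of_le_mul₀ (Real.sqrt_nonneg _) (Real.sqrt_nonneg _)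
    have e1 : ∑ i, |t i| = ∑ i ∈ Finset.univ.filter (fun i : Fin p => (i : ℕ) < K), |t i| := by
      symm
      apply Finset.sum_subset (Finset.filter_subset _ _)
      intro i _ hi
      rw [ht0 i (by simpa using hi), abs_zero]
    rw [e1]
    refine (l1_part _ _).trans ?_
    rw [card_lt hKp]
    gcongr
    exact Finset.filter_subset _ _
  · intro k hk1 hkK δ2k hδ2k dk εk dtk hdk hεk hdtk hdpos
    have hkp : k < p := by omega
    set lp := lam ⟨p - 1, by omega⟩ with hlp
    have hlppos : 0 < lp := hpos _
    have hlk : lam ⟨k, by omega⟩ = lp + εk := by rw [hεk]; ring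
    have hε0 : 0 ≤ εk := by
      rw [hεk, sub_nonneg]
      exact hdesc _ _ (by rw [Fin.le_def]; simp; omega)
    have hd0 : 0 ≤ dk := by
      rw [hdk, sub_nonneg]
      exact hdesc _ _ (by rw [Fin.le_def]; simp)
    have hηi : ∀ i : Fin p, k + 1 ≤ i → η i ≤ lp + εk := by
      intro i hi
      rw [← hlk]
      apply heta (k + 1) i hi (Fin.snoc (fun l : Fin k => xi ⟨l, by omega⟩) δ)
      intro x hx
      have hx' : ∀ j : Fin p, (j : ℕ) < k → (M *ᵥ x) j = 0 := fun j hj => by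
        have := hx (Fin.castSucc ⟨j, hj⟩)
        rw [Fin.snoc_castSucc] at this
        exact this
      have hxδ : δ ⬝ᵥ x = 0 := by
        have := hx (Fin.last k)
        rwa [Fin.snoc_last] at this
      rw [hquad, hnorm, ← hDX, hxδ, Finset.mul_sum]
      simp only [ne_eq, OfNat.ofNat_ne_zero, not_false_eq_true, zero_pow, mul_zero, add_zero]
      apply Finset.sum_le_sum
      intro j _
      rcases lt_or_ge (j : ℕ) k with h | h
      · simp [hx' j h]
      · exact mul_le_mul_of_nonneg_right (hdesc _ _ h) (sq_nonneg _)
    set tt : Fin p → ℝ := fun i => if k + 1 ≤ (i : ℕ) then t i else 0 with htt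
    set x := U *ᵥ tt with hx
    have hxβ : x ⬝ᵥ β = ∑ i, tt i ^ 2 := by
      rw [← parseval Uᵀ hUr', hx, hUU]
      apply Finset.sum_congr rfl
      intro i _
      simp only [htt]
      split_ifs
      · rw [sq]
      · simp
    have hxx : x ⬝ᵥ x = ∑ i, tt i ^ 2 := by
      rw [hx, parseval U hU, self_dot]
    have hxA : x ⬝ᵥ (A *ᵥ x) ≤ (lp + εk) * ∑ i, tt i ^ 2 := by
      rw [hx, hquadU, Finset.mul_sum]
      apply Finset.sum_le_sum
      intro i _
      simp only [htt]
      split_ifs with h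
      · exact mul_le_mul_of_nonneg_right (hηi i h) (sq_nonneg _)
      · simp
    have hMδ2 : ∀ j, (M *ᵥ δ2k) j = if (j : ℕ) < k then 0 else D j := by
      intro j
      change xi j ⬝ᵥ δ2k = _
      rw [hδ2k, dotProduct_sum]
      simp only [dotProduct_smul, horth, smul_eq_mul, mul_ite, mul_one, mul_zero]
      rw [Finset.sum_ite_eq]
      by_cases h : (j : ℕ) < k
      · rw [if_neg (by simpa using h), if_pos h]
      · rw [if_pos (by simpa using h), if_neg h]; rfl
    have hb2 : ∑ i, δ2k i ^ 2 = ∑ j : Fin p, if (j : ℕ) < k then 0 else D j ^ 2 := by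
      rw [← self_dot, hnorm]
      apply Finset.sum_congr rfl
      intro j _
      rw [hMδ2]
      split_ifs <;> simp
    have hab : ∑ i, δ i ^ 2 = (∑ j : Fin p, if (j : ℕ) < k then D j ^ 2 else 0) + ∑ i, δ2k i ^ 2 := by
      rw [hb2, ← self_dot, hnorm, ← Finset.sum_add_distrib]
      apply Finset.sum_congr rfl
      intro j _
      split_ifs <;> simp [hD]
    rw [hab] at hdtk
    have hdt0 : 0 < dtk := by linarith
    have key := key_coord (fun j : Fin p => (j : ℕ) < k) lam D (M *ᵥ x) lp dk εk ρ
      (∑ i, δ2k i ^ 2) _ dtk hlppos hd0 hρ hε0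
      (by
        intro j hj
        have := hdesc j ⟨k - 1, by omega⟩ (by rw [Fin.le_def]; simp; omega)
        linarith)
      (by
        intro j hj
        constructor
        · exact hdesc _ _ (by rw [Fin.le_def]; simp; omega)
        · rw [← hlk]
          exact hdesc _ _ (by rw [Fin.le_def]; simp; omega))
      rfl hb2 hdtk hdt0
      (by rw [← hquad, ← hnorm, hxx]; exact hxA)
    have e1 : ∑ j, (M *ᵥ x) j * (D j / lam j) = ∑ i, tt i ^ 2 := by
      rw [← hxβ, ← parseval M hMl]
      apply Finset.sum_congr rfl
      intro j _
      rw [hB]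
    have e2 : ∑ j, (D j / lam j) ^ 2 = ∑ i, t i ^ 2 := by
      rw [← self_dot t, ht, parseval Uᵀ hUr', hnorm]
      apply Finset.sum_congr rfl
      intro j _
      rw [hB]
    rw [e1, e2, ← hnorm, hxx] at key
    have hr1 : √(εk / dtk) ≤ √(εk / (dtk - 2 * εk)) := by
      apply Real.sqrt_le_sqrt
      apply div_le_div_of_nonneg_left hε0 hdpos
      linarith
    set R := εk / lp + √(εk / (dtk - 2 * εk)) with hR
    have hR0 : 0 ≤ R := by positivity
    have htail : √(∑ i, tt i ^ 2) ≤ √(∑ i, t i ^ 2) * R := by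
      have h0 : 0 ≤ ∑ i, tt i ^ 2 := Finset.sum_nonneg fun _ _ => sq_nonneg _
      rcases h0.lt_or_eq with h | h
      · have hs : 0 < √(∑ i, tt i ^ 2) := Real.sqrt_pos.mpr h
        have hs2 := Real.mul_self_sqrt h0
        have : √(∑ i, t i ^ 2) * (εk / lp + √(εk / dtk)) ≤ √(∑ i, t i ^ 2) * R := by
          gcongr
          rw [hR]; linarith
        refine le_trans ?_ this
        refine le_of_mul_le_mul_left ?_ hs
        rw [hs2, ← mul_assoc]
        exact key
      · rw [← h, Real.sqrt_zero]; positivity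
    have hfac : 1 ≤ (lp + εk) / lp := by
      rw [le_div_iff₀ hlppos]; linarith
    apply div_le_of_le_mul₀ (Real.sqrt_nonneg _) (by positivity)
    have hcard : (Finset.univ.filter (fun i : Fin p => ¬ (i : ℕ) < k + 1)).card = p - k - 1 := by
      have h1 := Finset.card_filter_add_card_filter_not (s := (Finset.univ : Finset (Fin p)))
        (fun i : Fin p => (i : ℕ) < k + 1)
      rw [card_lt (by omega)] at h1
      simp only [Finset.card_univ, Fintype.card_fin] at h1
      omega
    rw [← Finset.sum_filter_add_sum_filter_not Finset.univ (fun i : Fin p => (i : ℕ) < k + 1)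
      (fun i => |t i|), add_mul]
    apply add_le_add
    · refine (l1_part _ _).trans ?_
      rw [card_lt (by omega)]
      push_cast
      gcongr
      exact Finset.filter_subset _ _
    · refine (l1_part _ _).trans ?_
      rw [hcard]
      have e3 : ∑ i ∈ Finset.univ.filter (fun i : Fin p => ¬ (i : ℕ) < k + 1), t i ^ 2 = ∑ i, tt i ^ 2 := by
        rw [Finset.sum_filter]
        apply Finset.sum_congr rfl
        intro i _
        simp only [htt, not_lt]
        split_ifs <;> simp
      rw [e3]
      calc √((p - k - 1 : ℕ)) * √(∑ i, tt i ^ 2)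
          ≤ √((p - k - 1 : ℕ)) * (√(∑ i, t i ^ 2) * R) := by gcongr
        _ = √((p - k - 1 : ℕ)) * 1 * R * √(∑ i, t i ^ 2) := by ring
        _ ≤ _ := by gcongr
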